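/- Let c > 0 and K < 0, and define F(y) = G(y, Ky + c) for y ≤ 0 (the random limit normal function with σ = 1 and h(y) = Ky + c). Then F is differentiable on (−∞, 0) and its derivative f(y) = F′(y) is a monotone nondecreasing function of y on (−∞, 0); moreover f(y) > 0 for all y < 0. -/

import Mathlib

/-- The CDF at `y` of a centered normal distribution with standard deviation `s`. -/
noncomputable def gaussCDF (y s : ℝ) : ℝ :=
  (Real.sqrt (2 * Real.pi * s ^ 2))⁻¹ * ∫ x in Set.Iic y, Real.exp (-x ^ 2 / (2 * s ^ 2))

/-!
A centered normal variable with standard deviation `s` is `s` times a standard one, so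
`F y = Φ (y / (K y + c))`, where `Φ` is the standard normal CDF, with density `φ`. Hence
`F' y = φ (y / (K y + c)) * (c / (K y + c) ^ 2)`. On `(-∞, 0)` the argument of `φ` is increasing and
negative, where `φ` increases, and `K y + c` is positive and decreasing: both factors are
positive and nondecreasing.
-/

open MeasureTheory ProbabilityTheory Set
open scoped NNReal

section IntegralIic

variable {E : Type*} [NormedAddCommGroup E] [NormedSpace ℝ E] [CompleteSpace E]

theorem hasDerivAt_integral_Iic {f : ℝ → E} (hf : Integrable f) {a : ℝ} (ha : ContinuousAt f a) :
    HasDerivAt (fun u ↦ ∫ x in Iic u, f x) (f a) a := by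
  have split (u : ℝ) : ∫ x in Iic u, f x = (∫ x in Iic 0, f x) + ∫ x in (0 : ℝ)..u, f x := by
    rw [← intervalIntegral.integral_Iic_sub_Iic hf.integrableOn hf.integrableOn, add_sub_cancel]
  rw [funext split]
  exact (intervalIntegral.integral_hasDerivAt_right hf.intervalIntegrable
    hf.aestronglyMeasurable.stronglyMeasurableAtFilter ha).const_add _

end IntegralIic

section Gaussian

variable (μ : ℝ) {v : ℝ≥0}

theorem monotoneOn_gaussianPDFReal : MonotoneOn (gaussianPDFReal μ v) (Iic μ) := by
  intro x _ y (hy : y ≤ μ) hxy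
  have hsq : (y - μ) ^ 2 ≤ (x - μ) ^ 2 := by nlinarith
  simp only [gaussianPDFReal]
  gcongr

theorem cdf_gaussianReal_eq_integral (hv : v ≠ 0) (x : ℝ) :
    cdf (gaussianReal μ v) x = ∫ t in Iic x, gaussianPDFReal μ v t := by
  rw [cdf_eq_real, measureReal_def, gaussianReal_apply_eq_integral μ hv,
    ENNReal.toReal_ofReal (integral_nonneg (gaussianPDFReal_nonneg μ v))]

theorem hasDerivAt_cdf_gaussianReal (hv : v ≠ 0) (x : ℝ) :
    HasDerivAt (cdf (gaussianReal μ v)) (gaussianPDFReal μ v x) x := by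
  have hcont : Continuous (gaussianPDFReal μ v) := by
    unfold gaussianPDFReal
    fun_prop
  rw [funext (cdf_gaussianReal_eq_integral μ hv)]
  exact hasDerivAt_integral_Iic (integrable_gaussianPDFReal μ v) hcont.continuousAt

end Gaussian

theorem cdf_map_const_mul (μ : Measure ℝ) [IsProbabilityMeasure μ] {a : ℝ} (ha : 0 < a) (x : ℝ) :
    cdf (μ.map (a * ·)) x = cdf μ (x / a) := by
  have hmeas : Measurable (a * · : ℝ → ℝ) := measurable_const_mul a
  have := Measure.isProbabilityMeasure_map (μ := μ) hmeas.aemeasurable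
  rw [cdf_eq_real, cdf_eq_real, map_measureReal_apply hmeas measurableSet_Iic,
    preimage_const_mul_Iic₀ x ha]

theorem gaussCDF_eq_cdf {s : ℝ} (hs : s ≠ 0) (y : ℝ) :
    gaussCDF y s = cdf (gaussianReal 0 (.mk (s ^ 2) (sq_nonneg s))) y := by
  have hv : NNReal.mk (s ^ 2) (sq_nonneg s) ≠ 0 := by simpa [← NNReal.coe_ne_zero] using hs
  rw [cdf_gaussianReal_eq_integral 0 hv]
  simp only [gaussianPDFReal, integral_const_mul, sub_zero, NNReal.coe_mk, gaussCDF]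

theorem gaussCDF_eq_cdf_div {s : ℝ} (hs : 0 < s) (y : ℝ) :
    gaussCDF y s = cdf (gaussianReal 0 1) (y / s) := by
  rw [gaussCDF_eq_cdf hs.ne', ← cdf_map_const_mul _ hs, gaussianReal_map_const_mul, mul_zero,
    mul_one]

theorem hasDerivAt_gaussCDF {h : ℝ → ℝ} {h' y : ℝ} (hh : HasDerivAt h h' y) (hy : 0 < h y) :
    HasDerivAt (fun z ↦ gaussCDF z (h z))
      (gaussianPDFReal 0 1 (y / h y) * ((h y - y * h') / h y ^ 2)) y := by
  have hquot : HasDerivAt (fun z ↦ z / h z) ((h y - y * h') / h y ^ 2) y := by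
    simpa only [one_mul] using (hasDerivAt_id' y).fun_div hh hy.ne'
  refine ((hasDerivAt_cdf_gaussianReal 0 one_ne_zero _).comp y hquot).congr_of_eventuallyEq ?_
  filter_upwards [hh.continuousAt.eventually_const_lt hy] with z hz
  exact gaussCDF_eq_cdf_div hz z

section Affine

variable {c K : ℝ}

theorem hasDerivAt_gaussCDF_affine {y : ℝ} (hy : 0 < K * y + c) :
    HasDerivAt (fun z ↦ gaussCDF z (K * z + c))
      (gaussianPDFReal 0 1 (y / (K * y + c)) * (c / (K * y + c) ^ 2)) y := by
  have haffine : HasDerivAt (fun z ↦ K * z + c) K y := by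
    simpa only [mul_one] using ((hasDerivAt_id' y).const_mul K).add_const c
  convert hasDerivAt_gaussCDF haffine hy using 3
  ring

theorem monotoneOn_div_affine (hc : 0 ≤ c) :
    MonotoneOn (fun y ↦ y / (K * y + c)) {y | 0 < K * y + c} := by
  intro y hy z hz hyz
  have hcross : y * (K * z + c) ≤ z * (K * y + c) := by
    linear_combination c * hyz
  exact (div_le_div_iff₀ hy hz).2 hcross

theorem affine_pos_of_nonpos (hc : 0 < c) (hK : K ≤ 0) {y : ℝ} (hy : y ≤ 0) : 0 < K * y + c :=
  add_pos_of_nonneg_of_pos (mul_nonneg_of_nonpos_of_nonpos hK hy) hc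

theorem monotoneOn_div_affine_sq (hc : 0 < c) (hK : K ≤ 0) :
    MonotoneOn (fun y ↦ c / (K * y + c) ^ 2) (Iic 0) := by
  intro y _ z hz hyz
  have hzpos : 0 < K * z + c := affine_pos_of_nonpos hc hK hz
  have hle : K * z + c ≤ K * y + c := add_le_add_left (mul_le_mul_of_nonpos_left hyz hK) c
  dsimp only
  gcongr

theorem monotoneOn_gaussianPDFReal_div_affine (hc : 0 < c) (hK : K ≤ 0) :
    MonotoneOn (fun y ↦ gaussianPDFReal 0 1 (y / (K * y + c))) (Iic 0) :=
  (monotoneOn_gaussianPDFReal 0).comp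
    ((monotoneOn_div_affine hc.le).mono fun _ hy ↦ affine_pos_of_nonpos hc hK hy)
    fun _ hy ↦ div_nonpos_of_nonpos_of_nonneg hy (affine_pos_of_nonpos hc hK hy).le

end Affine

/-- For `c > 0` and `K < 0`, the random limit normal function `F(y) = G(y, K y + c)`
(with `σ = 1`) is differentiable on `(-∞, 0)`, its derivative is monotone nondecreasing
on `(-∞, 0)`, and the derivative is strictly positive there. -/
theorem random_limit_normal_stmt15
    (c K : ℝ) (hc : 0 < c) (hK : K < 0)
    (F : ℝ → ℝ) (hF : ∀ y ≤ 0, F y = gaussCDF y (K * y + c)) :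
    DifferentiableOn ℝ F (Set.Iio 0) ∧
    MonotoneOn (deriv F) (Set.Iio 0) ∧
    ∀ y < 0, 0 < deriv F y := by
  let f y := gaussianPDFReal 0 1 (y / (K * y + c)) * (c / (K * y + c) ^ 2)
  have hpos (y : ℝ) (hy : y < 0) : 0 < K * y + c := affine_pos_of_nonpos hc hK.le hy.le
  have hderiv (y : ℝ) (hy : y < 0) : HasDerivAt F (f y) y :=
    (hasDerivAt_gaussCDF_affine (hpos y hy)).congr_of_eventuallyEq <|
      Filter.eventually_of_mem (Iio_mem_nhds hy) fun z hz ↦ hF z (le_of_lt hz)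
  have hmono : MonotoneOn f (Iic 0) :=
    (monotoneOn_gaussianPDFReal_div_affine hc hK.le).mul (monotoneOn_div_affine_sq hc hK.le)
      (fun _ _ ↦ gaussianPDFReal_nonneg _ _ _) fun _ _ ↦ by positivity
  refine ⟨fun y hy ↦ (hderiv y hy).differentiableAt.differentiableWithinAt, ?_, fun y hy ↦ ?_⟩
  · exact (hmono.mono Iio_subset_Iic_self).congr fun y hy ↦ (hderiv y hy).deriv.symm
  · rw [(hderiv y hy).deriv]
    exact mul_pos (gaussianPDFReal_pos _ _ _ one_ne_zero) (div_pos hc (pow_pos (hpos y hy) 2))
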